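/- Let E belong to the class A(λ,n,m). If there exists a dust-like self-similar set F that is Lipschitz equivalent to E, then there exists an integer k ≥ 2 such that the polynomial x^{2k} − n·x^k + m is reducible in ℤ[x]. -/

import Mathlib

open MeasureTheory Polynomial

/-- The class `𝒜(λ, n, m)` of self-similar subsets of `ℝ` with `m` exact overlaps,
generated by `n` similitudes `fᵢ x = λ x + bᵢ` of the same ratio `λ`. -/
def IsInClassA (lam : ℝ) (n m : ℕ) (E : Set ℝ) : Prop :=
  lam ∈ Set.Ioo (0 : ℝ) 1 ∧ 1 ≤ m ∧ m + 2 ≤ n ∧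
  ∃ b : ℕ → ℝ,
    b 0 = 0 ∧ b (n - 1) = 1 - lam ∧
    (∀ i, i + 1 < n → b i < b (i + 1)) ∧
    (∀ i, i + 1 < n →
      (Set.Icc (b i) (b i + lam) ∩ Set.Icc (b (i + 1)) (b (i + 1) + lam)).Nonempty →
        volume (Set.Icc (b i) (b i + lam) ∩ Set.Icc (b (i + 1)) (b (i + 1) + lam)) = 0 ∨
        volume (Set.Icc (b i) (b i + lam) ∩ Set.Icc (b (i + 1)) (b (i + 1) + lam)) =
          ENNReal.ofReal (lam * lam)) ∧
    {i : ℕ | i + 1 < n ∧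
      volume (Set.Icc (b i) (b i + lam) ∩ Set.Icc (b (i + 1)) (b (i + 1) + lam)) =
        ENNReal.ofReal (lam * lam)}.ncard = m ∧
    E.Nonempty ∧ IsCompact E ∧
    E = ⋃ i ∈ Finset.range n, (fun x => lam * x + b i) '' E

/-- A dust-like self-similar set in `ℝ^d`: the attractor of `t ≥ 2` contracting similitudes
whose images are pairwise disjoint (strong separation condition). -/
def IsDustLike {d : ℕ} (F : Set (EuclideanSpace ℝ (Fin d))) : Prop :=
  F.Nonempty ∧ IsCompact F ∧
  ∃ t : ℕ, 2 ≤ t ∧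
    ∃ (g : Fin t → EuclideanSpace ℝ (Fin d) → EuclideanSpace ℝ (Fin d)) (r : Fin t → ℝ),
      (∀ j, r j ∈ Set.Ioo (0 : ℝ) 1) ∧
      (∀ j x y, dist (g j x) (g j y) = r j * dist x y) ∧
      F = ⋃ j, g j '' F ∧
      (∀ j j', j ≠ j' → Disjoint (g j '' F) (g j' '' F))

/-- Lipschitz equivalence of two sets in (possibly different) metric spaces. -/
def LipEquiv {X Y : Type*} [MetricSpace X] [MetricSpace Y] (A : Set X) (B : Set Y) : Prop :=
  ∃ f : A → B, Function.Bijective f ∧ ∃ C : ℝ, 0 < C ∧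
    ∀ x y : A, C⁻¹ * dist x y ≤ dist (f x) (f y) ∧ dist (f x) (f y) ≤ C * dist x y

/-!
Let `α > 1 > β > 0` be the roots of `x ^ 2 - n * x + m`. Because overlaps are exact, the number of
level-`q` intervals of `E` satisfies the recursion with this characteristic polynomial, so it grows
like `α ^ q`, and counting left endpoints defines a mass on the relatively clopen parts of `E`. A
part of diameter comparable to `λ ^ k` which is separated from the rest of `E` at that scale has
mass `a / α ^ k`, with `a` in a finite set.

A Lipschitz equivalence carries the cylinders of a dust-like set `F` with ratios `r j` to such parts
of `E`. Their masses form an additive function on words comparable with the product of the weights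
`r j ^ s`, where `s` is the common dimension, so the weights sum to `1`. The quotient of the two is
a bounded positive harmonic function whose growth factors take finitely many values; it is therefore
constant below some word, and each weight has a power which is an integral power of `α`.

Thus for some `k` and `y = α ^ (1 / k)` all weights are powers `y ^ (-e j)`, with sum `1`. If
`x ^ (2 * k) - n * x ^ k + m` were irreducible, the relation `∑ y ^ (-e j) = 1` would also hold for
the root `y' = β ^ (1 / k) < 1`, for which every summand is at least `1`.
-/

section DigitSets

open scoped Pointwise

/-- A finite set `T` of reals is overlap-separated at scale `η` if any two distinct points of `T`
are at distance exactly `η * (1 - lam)` or at least `η`: the intervals of length `η` starting at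
the points of `T` then overlap in a fraction `lam` of their length or not at all (up to endpoints).
-/
def IsOverlapSeparated (lam η : ℝ) (T : Finset ℝ) : Prop :=
  ∀ s ∈ T, ∀ t ∈ T, s < t → t - s = η * (1 - lam) ∨ η ≤ t - s

/-- The translation parts `b₁, …, bₙ` of the maps `x ↦ lam * x + bᵢ` generating a set of the class
`𝒜(lam, n, m)`; the number of maps and the number of overlaps are left free. -/
structure IsOverlapDigitSet (lam : ℝ) (B : Finset ℝ) : Prop where
  pos : 0 < lam
  le_half : lam ≤ 1 / 2
  zero_mem : 0 ∈ B
  one_sub_mem : 1 - lam ∈ B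
  subset_Icc : ∀ b ∈ B, b ∈ Set.Icc 0 (1 - lam)
  separated : IsOverlapSeparated lam lam B

/-- The left endpoints of the images of `[0, 1]` under the compositions of `k` maps
`x ↦ lam * x + b`, `b ∈ B`. -/
noncomputable def endpoints (lam : ℝ) (B : Finset ℝ) (k : ℕ) : Finset ℝ :=
  ∑ i ∈ Finset.range k, lam ^ i • B

/-- The points of `T` that start an interval of length `η` overlapping the next one, when `T` is
overlap-separated at scale `η`. -/
noncomputable def overlapStarts (lam η : ℝ) (T : Finset ℝ) : Finset ℝ :=
  {t ∈ T | t + η * (1 - lam) ∈ T}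

variable {lam : ℝ} {B : Finset ℝ}

lemma endpoints_zero : endpoints lam B 0 = {0} := rfl

lemma endpoints_add (k l : ℕ) :
    endpoints lam B (k + l) = endpoints lam B k + lam ^ k • endpoints lam B l := by
  simp only [endpoints, Finset.sum_range_add, Finset.smul_sum, smul_smul, pow_add]

lemma endpoints_one : endpoints lam B 1 = B := by
  simp [endpoints]

lemma endpoints_succ (k : ℕ) : endpoints lam B (k + 1) = endpoints lam B k + lam ^ k • B := by
  rw [endpoints_add, endpoints_one]

lemma endpoints_succ' (k : ℕ) : endpoints lam B (k + 1) = B + lam • endpoints lam B k := by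
  rw [add_comm k, endpoints_add, endpoints_one, pow_one]

lemma mem_add_smul {η x : ℝ} {S T : Finset ℝ} :
    x ∈ S + η • T ↔ ∃ s ∈ S, ∃ t ∈ T, s + η * t = x := by
  simp [Finset.mem_add, Finset.mem_smul_finset]

namespace IsOverlapDigitSet

lemma lt_one (hB : IsOverlapDigitSet lam B) : lam < 1 := by
  linarith [hB.le_half]

lemma endpoints_nonneg (hB : IsOverlapDigitSet lam B) (k : ℕ) :
    ∀ u ∈ endpoints lam B k, 0 ≤ u := by
  induction k with
  | zero => simp [endpoints_zero]
  | succ k ih =>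
    rw [endpoints_succ']
    intro u hu
    obtain ⟨b, hb, w, hw, rfl⟩ := mem_add_smul.1 hu
    exact add_nonneg (hB.subset_Icc b hb).1 (mul_nonneg hB.pos.le (ih w hw))

lemma endpoints_lt_one (hB : IsOverlapDigitSet lam B) (k : ℕ) :
    ∀ u ∈ endpoints lam B k, u < 1 := by
  induction k with
  | zero => simp [endpoints_zero]
  | succ k ih =>
    rw [endpoints_succ']
    intro u hu
    obtain ⟨b, hb, w, hw, rfl⟩ := mem_add_smul.1 hu
    have hb' := (hB.subset_Icc b hb).2
    have hw' : lam * w < lam := mul_lt_of_lt_one_right hB.pos (ih w hw)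
    linarith

lemma smul_mem_endpoints_succ (hB : IsOverlapDigitSet lam B) {k : ℕ} {w : ℝ}
    (hw : w ∈ endpoints lam B k) : lam * w ∈ endpoints lam B (k + 1) :=
  endpoints_succ' k ▸ mem_add_smul.2 ⟨0, hB.zero_mem, w, hw, zero_add _⟩

lemma mem_endpoints_succ_iff_of_one_sub_le (hB : IsOverlapDigitSet lam B) (k : ℕ) :
    ∀ u, 1 - lam ≤ u →
      (u ∈ endpoints lam B (k + 1) ↔ ∃ w ∈ endpoints lam B k, 1 - lam + lam * w = u) := by
  suffices h : ∀ u ∈ endpoints lam B (k + 1), 1 - lam ≤ u →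
      ∃ w ∈ endpoints lam B k, 1 - lam + lam * w = u from fun u hu =>
    ⟨fun hmem => h u hmem hu, fun ⟨w, hw, hwu⟩ =>
      endpoints_succ' k ▸ mem_add_smul.2 ⟨1 - lam, hB.one_sub_mem, w, hw, hwu⟩⟩
  induction k with
  | zero =>
    rw [zero_add, endpoints_one]
    exact fun u hu hle => ⟨0, by simp [endpoints_zero], by linarith [(hB.subset_Icc u hu).2]⟩
  | succ k ih =>
    rw [endpoints_succ']
    intro u hu hle
    obtain ⟨b, hb, w, hw, rfl⟩ := mem_add_smul.1 hu
    rcases (hB.subset_Icc b hb).2.eq_or_lt with rfl | hlt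
    · exact ⟨w, hw, rfl⟩
    rcases hB.separated b hb _ hB.one_sub_mem hlt with hgap | hgap
    · have hw' : 1 - lam ≤ w := le_of_mul_le_mul_left (by linarith) hB.pos
      obtain ⟨w', hmem, rfl⟩ := ih w hw hw'
      exact ⟨lam * w', hB.smul_mem_endpoints_succ hmem, by linear_combination hgap⟩
    · have := mul_lt_of_lt_one_right hB.pos (hB.endpoints_lt_one _ w hw)
      linarith

end IsOverlapDigitSet

lemma IsOverlapSeparated.add_smul {η : ℝ} {T : Finset ℝ} (hT : IsOverlapSeparated lam η T)
    (hB : IsOverlapDigitSet lam B) (hη : 0 < η) :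
    IsOverlapSeparated lam (η * lam) (T + η • B) := by
  intro x hx y hy hxy
  obtain ⟨s, hs, b, hb, rfl⟩ := mem_add_smul.1 hx
  obtain ⟨t, ht, c, hc, rfl⟩ := mem_add_smul.1 hy
  have gap : ∀ b ∈ B, ∀ c ∈ B, b ≤ c →
      η * (c - b) = 0 ∨ η * (c - b) = η * lam * (1 - lam) ∨ η * lam ≤ η * (c - b) := by
    intro b hb c hc hbc
    rcases hbc.eq_or_lt with rfl | hbc
    · exact .inl (by ring)
    · refine .inr ((hB.separated b hb c hc hbc).imp (fun h => by rw [h]; ring) fun h => ?_)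
      exact mul_le_mul_of_nonneg_left h hη.le
  have hb' := hB.subset_Icc b hb
  have hc' := hB.subset_Icc c hc
  have hbη : η * b ≤ η * (1 - lam) := mul_le_mul_of_nonneg_left hb'.2 hη.le
  have hcη : η * c ≤ η * (1 - lam) := mul_le_mul_of_nonneg_left hc'.2 hη.le
  have hb0 : 0 ≤ η * b := mul_nonneg hη.le hb'.1
  have hc0 : 0 ≤ η * c := mul_nonneg hη.le hc'.1
  have hηlam : 0 < η * lam := mul_pos hη hB.pos
  rcases lt_trichotomy s t with hst | rfl | hst
  · rcases hT s hs t ht hst with hgap | hgap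
    · -- `t + η c - (s + η b) = η c + η ((1 - lam) - b)`, a sum of two gaps of `η • B`.
      have hhalf : η * lam ≤ 2 * (η * lam * (1 - lam)) := by nlinarith [hB.le_half]
      rcases gap b hb _ hB.one_sub_mem hb'.2 with h₁ | h₁ | h₁ <;>
        rcases gap 0 hB.zero_mem c hc hc'.1 with h₂ | h₂ | h₂ <;>
          first | exact .inl (by linarith) | exact .inr (by linarith)
    · exact .inr (by linarith)
  · have hbc : b < c := lt_of_mul_lt_mul_left (by linarith) hη.le
    rcases gap b hb c hc hbc.le with h | h | h <;>
      first | exact .inl (by linarith) | exact .inr (by linarith)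
  · rcases hT t ht s hs hst with hgap | hgap <;> linarith

namespace IsOverlapDigitSet

lemma separated_endpoints (hB : IsOverlapDigitSet lam B) (k : ℕ) :
    IsOverlapSeparated lam (lam ^ k) (endpoints lam B k) := by
  induction k with
  | zero => simp [IsOverlapSeparated, endpoints_zero]
  | succ k ih =>
    rw [endpoints_succ, pow_succ]
    exact ih.add_smul hB (pow_pos hB.pos k)

end IsOverlapDigitSet

/-- The pairs `(t, u)` for which `t + η * u` lies in the part of the interval starting at `t` that
is shared with the next interval. -/
noncomputable def overlapPairs (lam η : ℝ) (B T : Finset ℝ) (k : ℕ) : Finset (ℝ × ℝ) :=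
  overlapStarts lam η T ×ˢ (endpoints lam B k).image (1 - lam + lam * ·)

lemma card_overlapPairs {η : ℝ} {T : Finset ℝ} (hlam : lam ≠ 0) (k : ℕ) :
    (overlapPairs lam η B T k).card =
      (overlapStarts lam η T).card * (endpoints lam B k).card := by
  rw [overlapPairs, Finset.card_product, Finset.card_image_of_injective]
  exact (add_right_injective _).comp (mul_right_injective₀ hlam)

namespace IsOverlapDigitSet

variable {η : ℝ} {T : Finset ℝ}

lemma overlapPairs_subset (hB : IsOverlapDigitSet lam B) (k : ℕ) :
    overlapPairs lam η B T k ⊆ T ×ˢ endpoints lam B (k + 1) := by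
  refine Finset.product_subset_product (Finset.filter_subset _ _) fun u hu => ?_
  obtain ⟨w, hw, rfl⟩ := Finset.mem_image.1 hu
  exact endpoints_succ' k ▸ mem_add_smul.2 ⟨_, hB.one_sub_mem, w, hw, rfl⟩

lemma mem_overlapPairs_of_add_eq (hB : IsOverlapDigitSet lam B) (hη : 0 < η)
    (hT : IsOverlapSeparated lam η T) {k : ℕ} {s t u v : ℝ} (hs : s ∈ T) (ht : t ∈ T)
    (hu : u ∈ endpoints lam B (k + 1)) (hv : v ∈ endpoints lam B (k + 1)) (hst : s < t)
    (heq : s + η * u = t + η * v) : (s, u) ∈ overlapPairs lam η B T k := by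
  have hu1 : η * u < η := mul_lt_of_lt_one_right hη (hB.endpoints_lt_one _ u hu)
  have hv0 : 0 ≤ η * v := mul_nonneg hη.le (hB.endpoints_nonneg _ v hv)
  have hgap : t - s = η * (1 - lam) :=
    (hT s hs t ht hst).resolve_right fun h => by linarith
  have hle : 1 - lam ≤ u := le_of_mul_le_mul_left (by linarith) hη
  have hst' : s + η * (1 - lam) = t := by linarith
  exact Finset.mk_mem_product (Finset.mem_filter.2 ⟨hs, hst' ▸ ht⟩)
    (Finset.mem_image.2 ((hB.mem_endpoints_succ_iff_of_one_sub_le k u hle).1 hu))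

lemma injOn_compl_overlapPairs (hB : IsOverlapDigitSet lam B) (hη : 0 < η)
    (hT : IsOverlapSeparated lam η T) (k : ℕ) :
    Set.InjOn (fun p : ℝ × ℝ => p.1 + η * p.2)
      (T ×ˢ endpoints lam B (k + 1) \ overlapPairs lam η B T k : Finset (ℝ × ℝ)) := by
  rintro ⟨s, u⟩ hsu ⟨t, v⟩ htv (heq : s + η * u = t + η * v)
  obtain ⟨hsu, hsu'⟩ := Finset.mem_sdiff.1 hsu
  obtain ⟨htv, htv'⟩ := Finset.mem_sdiff.1 htv
  obtain ⟨hs, hu⟩ := Finset.mem_product.1 hsu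
  obtain ⟨ht, hv⟩ := Finset.mem_product.1 htv
  rcases lt_trichotomy s t with hst | rfl | hst
  · exact absurd (hB.mem_overlapPairs_of_add_eq hη hT hs ht hu hv hst heq) hsu'
  · rw [mul_left_cancel₀ hη.ne' (add_left_cancel heq)]
  · exact absurd (hB.mem_overlapPairs_of_add_eq hη hT ht hs hv hu hst heq.symm) htv'

lemma image_compl_overlapPairs (hB : IsOverlapDigitSet lam B) (η : ℝ) (T : Finset ℝ) (k : ℕ) :
    (T ×ˢ endpoints lam B (k + 1) \ overlapPairs lam η B T k).image (fun p => p.1 + η * p.2) =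
      T + η • endpoints lam B (k + 1) := by
  ext x
  simp only [Finset.mem_image, Finset.mem_sdiff, Prod.exists, mem_add_smul]
  constructor
  · rintro ⟨t, u, ⟨htu, -⟩, rfl⟩
    obtain ⟨ht, hu⟩ := Finset.mem_product.1 htu
    exact ⟨t, ht, u, hu, rfl⟩
  · rintro ⟨t, ht, u, hu, rfl⟩
    by_cases htu : (t, u) ∈ overlapPairs lam η B T k
    · -- A point in an overlap is also in the next interval, where it is not near the right end.
      obtain ⟨ht', hu'⟩ := Finset.mem_product.1 htu
      obtain ⟨w, hw, rfl⟩ := Finset.mem_image.1 hu'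
      refine ⟨t + η * (1 - lam), lam * w, ⟨Finset.mk_mem_product (Finset.mem_filter.1 ht').2
        (hB.smul_mem_endpoints_succ hw), fun hmem => ?_⟩, by ring⟩
      obtain ⟨w', hw', hww'⟩ := Finset.mem_image.1 (Finset.mem_product.1 hmem).2
      have hw1 := mul_lt_of_lt_one_right hB.pos (hB.endpoints_lt_one _ w hw)
      have hw0 := mul_nonneg hB.pos.le (hB.endpoints_nonneg _ w' hw')
      simp only at hww'
      linarith [hB.le_half]
    · exact ⟨t, u, ⟨Finset.mk_mem_product ht hu, htu⟩, rfl⟩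

lemma card_add_smul_endpoints (hB : IsOverlapDigitSet lam B) (hη : 0 < η)
    (hT : IsOverlapSeparated lam η T) (k : ℕ) :
    (T + η • endpoints lam B (k + 1)).card +
        (overlapStarts lam η T).card * (endpoints lam B k).card =
      T.card * (endpoints lam B (k + 1)).card := by
  rw [← hB.image_compl_overlapPairs, Finset.card_image_of_injOn
      (hB.injOn_compl_overlapPairs hη hT k), ← card_overlapPairs hB.pos.ne',
    Finset.card_sdiff_add_card_eq_card (hB.overlapPairs_subset k), Finset.card_product]

lemma card_endpoints_add_two (hB : IsOverlapDigitSet lam B) (k : ℕ) :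
    (endpoints lam B (k + 2)).card + (overlapStarts lam lam B).card * (endpoints lam B k).card =
      B.card * (endpoints lam B (k + 1)).card := by
  rw [endpoints_succ' (k + 1)]
  exact hB.card_add_smul_endpoints hB.pos hB.separated k

variable {α β : ℝ}

lemma card_endpoints_mul_sub (hB : IsOverlapDigitSet lam B) (hadd : α + β = B.card)
    (hmul : α * β = (overlapStarts lam lam B).card) (k : ℕ) :
    ((endpoints lam B k).card : ℝ) * (α - β) = α ^ (k + 1) - β ^ (k + 1) := by
  induction k using Nat.twoStepInduction with
  | zero => simp [endpoints_zero]
  | one => rw [endpoints_one, ← hadd]; ring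
  | more k ih₀ ih₁ =>
    have hrec : ((endpoints lam B (k + 2)).card : ℝ) +
        (overlapStarts lam lam B).card * (endpoints lam B k).card =
          B.card * (endpoints lam B (k + 1)).card := mod_cast hB.card_endpoints_add_two k
    rw [← hadd, ← hmul] at hrec
    linear_combination (α - β) * hrec + (α + β) * ih₁ - α * β * ih₀

lemma tendsto_card_endpoints_div_pow (hB : IsOverlapDigitSet lam B) (hadd : α + β = B.card)
    (hmul : α * β = (overlapStarts lam lam B).card) (hβ : 0 ≤ β) (hβα : β < α) :
    Filter.Tendsto (fun k => ((endpoints lam B k).card : ℝ) / α ^ k) Filter.atTop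
      (nhds (α / (α - β))) := by
  have hα : 0 < α := hβ.trans_lt hβα
  have hsub : α - β ≠ 0 := (sub_pos.2 hβα).ne'
  have hcard : ∀ k, ((endpoints lam B k).card : ℝ) / α ^ k =
      α / (α - β) - β / (α - β) * (β / α) ^ k := by
    intro k
    rw [eq_div_of_mul_eq hsub (hB.card_endpoints_mul_sub hadd hmul k), div_pow]
    field_simp
    ring
  have hpow : Filter.Tendsto (fun k : ℕ => (β / α) ^ k) Filter.atTop (nhds 0) :=
    tendsto_pow_atTop_nhds_zero_of_lt_one (by positivity) ((div_lt_one hα).2 hβα)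
  simpa [hcard] using (hpow.const_mul (β / (α - β))).const_sub (α / (α - β))

end IsOverlapDigitSet

end DigitSets

section OverlapSequences

/-- The translation parts of the maps generating a set of the class `𝒜(lam, n, m)`, listed in
increasing order, with the conditions on overlaps expressed through the gaps. -/
structure IsOverlapSequence (lam : ℝ) (n : ℕ) (b : ℕ → ℝ) : Prop where
  pos : 0 < lam
  lt_one : lam < 1
  three_le : 3 ≤ n
  zero : b 0 = 0
  last : b (n - 1) = 1 - lam
  lt_succ : ∀ i, i + 1 < n → b i < b (i + 1)
  gap : ∀ i, i + 1 < n → b (i + 1) - b i = lam * (1 - lam) ∨ lam ≤ b (i + 1) - b i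

variable {lam : ℝ} {n : ℕ} {b : ℕ → ℝ}

namespace IsOverlapSequence

lemma strictMonoOn (hb : IsOverlapSequence lam n b) : StrictMonoOn b (Set.Iio n) :=
  strictMonoOn_of_lt_add_one Set.ordConnected_Iio fun i _ _ hi => hb.lt_succ i hi

lemma mul_one_sub_le_gap (hb : IsOverlapSequence lam n b) {i : ℕ} (hi : i + 1 < n) :
    lam * (1 - lam) ≤ b (i + 1) - b i := by
  rcases hb.gap i hi with h | h
  · exact h.ge
  · nlinarith [hb.pos]

lemma two_mul_le_sub (hb : IsOverlapSequence lam n b) {i j : ℕ} (hij : i + 2 ≤ j) (hj : j < n) :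
    2 * (lam * (1 - lam)) ≤ b j - b i := by
  have h₁ := hb.mul_one_sub_le_gap (i := i) (by lia)
  have h₂ := hb.mul_one_sub_le_gap (i := i + 1) (by lia)
  have h₃ : b (i + 2) ≤ b j :=
    hb.strictMonoOn.monotoneOn (Set.mem_Iio.2 (by lia)) hj hij
  linarith

lemma le_half (hb : IsOverlapSequence lam n b) : lam ≤ 1 / 2 := by
  have hn := hb.three_le
  have h := hb.two_mul_le_sub (i := 0) (j := n - 1) (by lia) (by lia)
  rw [hb.zero, hb.last] at h
  nlinarith [hb.lt_one]

lemma sub_eq_or_le_sub (hb : IsOverlapSequence lam n b) {i j : ℕ} (hi : i < n) (hj : j < n)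
    (hij : b i < b j) : b j - b i = lam * (1 - lam) ∧ i + 1 = j ∨ lam ≤ b j - b i := by
  have hle : i + 1 ≤ j := (hb.strictMonoOn.lt_iff_lt hi hj).1 hij
  obtain rfl | hlt := eq_or_lt_of_le hle
  · exact (hb.gap i hj).imp_left fun h => ⟨h, rfl⟩
  · have := hb.two_mul_le_sub hlt hj
    exact .inr (by nlinarith [hb.pos, hb.le_half])

lemma isOverlapDigitSet (hb : IsOverlapSequence lam n b) :
    IsOverlapDigitSet lam ((Finset.range n).image b) where
  pos := hb.pos
  le_half := hb.le_half
  zero_mem := Finset.mem_image.2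
    ⟨0, Finset.mem_range.2 (by linarith [hb.three_le]), hb.zero⟩
  one_sub_mem := Finset.mem_image.2
    ⟨n - 1, Finset.mem_range.2 (Nat.sub_one_lt_of_lt hb.three_le), hb.last⟩
  subset_Icc := by
    have hn := hb.three_le
    rintro _ hx
    obtain ⟨i, hi, rfl⟩ := Finset.mem_image.1 hx
    rw [Finset.mem_range] at hi
    rw [← hb.zero, ← hb.last]
    exact ⟨hb.strictMonoOn.monotoneOn (Set.mem_Iio.2 (by lia)) hi (by lia),
      hb.strictMonoOn.monotoneOn hi (Set.mem_Iio.2 (by lia)) (by lia)⟩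
  separated := by
    intro x hx y hy hxy
    obtain ⟨i, hi, rfl⟩ := Finset.mem_image.1 hx
    obtain ⟨j, hj, rfl⟩ := Finset.mem_image.1 hy
    exact (hb.sub_eq_or_le_sub (Finset.mem_range.1 hi) (Finset.mem_range.1 hj) hxy).imp_left
      And.left

lemma card_image_range (hb : IsOverlapSequence lam n b) : ((Finset.range n).image b).card = n := by
  rw [Finset.card_image_of_injOn (by simpa using hb.strictMonoOn.injOn), Finset.card_range]

lemma coe_overlapStarts (hb : IsOverlapSequence lam n b) :
    (overlapStarts lam lam ((Finset.range n).image b) : Set ℝ) =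
      b '' {i | i + 1 < n ∧ b (i + 1) - b i = lam * (1 - lam)} := by
  have hgap : 0 < lam * (1 - lam) := mul_pos hb.pos (sub_pos.2 hb.lt_one)
  ext x
  simp only [overlapStarts, Finset.mem_coe, Finset.mem_filter, Finset.mem_image, Finset.mem_range]
  constructor
  · rintro ⟨⟨i, hi, rfl⟩, j, hj, hij⟩
    rcases hb.sub_eq_or_le_sub hi hj (by linarith) with ⟨h, rfl⟩ | h
    · exact ⟨i, ⟨hj, h⟩, rfl⟩
    · nlinarith [hb.pos]
  · rintro ⟨i, ⟨hi, h⟩, rfl⟩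
    exact ⟨⟨i, by lia, rfl⟩, i + 1, hi, by linarith⟩

lemma card_overlapStarts (hb : IsOverlapSequence lam n b) :
    (overlapStarts lam lam ((Finset.range n).image b)).card =
      {i | i + 1 < n ∧ b (i + 1) - b i = lam * (1 - lam)}.ncard := by
  rw [← Set.ncard_coe_finset, hb.coe_overlapStarts]
  exact (hb.strictMonoOn.injOn.mono fun i hi => (Nat.lt_succ_self i).trans hi.1).ncard_image

end IsOverlapSequence

lemma volume_Icc_inter_Icc_add {x y l : ℝ} (hxy : x ≤ y) :
    volume (Set.Icc x (x + l) ∩ Set.Icc y (y + l)) = ENNReal.ofReal (x + l - y) := by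
  rw [Set.Icc_inter_Icc, Real.volume_Icc, max_eq_right hxy, min_eq_left (by gcongr)]

lemma volume_Icc_inter_Icc_add_eq_iff {x y l : ℝ} (hxy : x ≤ y) (hl : 0 < l) :
    volume (Set.Icc x (x + l) ∩ Set.Icc y (y + l)) = ENNReal.ofReal (l * l) ↔
      y - x = l * (1 - l) := by
  have hll : 0 < l * l := mul_pos hl hl
  rw [volume_Icc_inter_Icc_add hxy]
  refine ⟨fun h => ?_, fun h => congrArg _ (by linarith)⟩
  have hpos : 0 < x + l - y := ENNReal.ofReal_pos.1 (h ▸ ENNReal.ofReal_pos.2 hll)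
  linarith [(ENNReal.ofReal_eq_ofReal_iff hpos.le hll.le).1 h]

/-- `E` is the attractor of the maps `x ↦ lam * x + b`, `b ∈ B`. -/
structure IsDigitAttractor (lam : ℝ) (B : Finset ℝ) (E : Set ℝ) : Prop where
  nonempty : E.Nonempty
  isCompact : IsCompact E
  mem_iff : ∀ x, x ∈ E ↔ ∃ b ∈ B, ∃ y ∈ E, b + lam * y = x

theorem IsInClassA.exists_isOverlapDigitSet {m : ℕ} {E : Set ℝ} (hE : IsInClassA lam n m E) :
    ∃ B, IsOverlapDigitSet lam B ∧ IsDigitAttractor lam B E ∧ B.card = n ∧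
      (overlapStarts lam lam B).card = m := by
  obtain ⟨⟨hlam0, hlam1⟩, hm, hmn, b, hb0, hblast, hlt, hvol, hcard, hne, hcomp, heq⟩ := hE
  have hviff (i : ℕ) (hi : i + 1 < n) :=
    volume_Icc_inter_Icc_add_eq_iff (hlt i hi).le hlam0
  have hgap : ∀ i, i + 1 < n → b (i + 1) - b i = lam * (1 - lam) ∨ lam ≤ b (i + 1) - b i := by
    intro i hi
    rcases lt_or_ge (b i + lam) (b (i + 1)) with hgt | hle
    · exact .inr (by linarith)
    · refine (hvol i hi ⟨b (i + 1), ⟨(hlt i hi).le, hle⟩, le_rfl, by linarith⟩).symm.imp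
        (hviff i hi).1 fun h => ?_
      rw [volume_Icc_inter_Icc_add (hlt i hi).le, ENNReal.ofReal_eq_zero] at h
      linarith
  have hb : IsOverlapSequence lam n b := ⟨hlam0, hlam1, by lia, hb0, hblast, hlt, hgap⟩
  refine ⟨_, hb.isOverlapDigitSet, ⟨hne, hcomp, fun x => ?_⟩, hb.card_image_range, ?_⟩
  · nth_rw 1 [heq]
    simp [add_comm]
  · rw [hb.card_overlapStarts, ← hcard]
    congr 1
    ext i
    exact and_congr_right fun hi => (hviff i hi).symm

end OverlapSequences

section Attractors

variable {lam : ℝ} {B : Finset ℝ} {E : Set ℝ}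

namespace IsDigitAttractor

lemma subset_Icc (hE : IsDigitAttractor lam B E) (hB : IsOverlapDigitSet lam B) :
    E ⊆ Set.Icc 0 1 := by
  obtain ⟨a, ha, hmin⟩ := hE.isCompact.exists_isLeast hE.nonempty
  obtain ⟨c, hc, hmax⟩ := hE.isCompact.exists_isGreatest hE.nonempty
  have ha0 : 0 ≤ a := by
    obtain ⟨b, hb, y, hy, hba⟩ := (hE.mem_iff a).1 ha
    nlinarith [hmin hy, (hB.subset_Icc b hb).1, hB.pos, hB.lt_one]
  have hc1 : c ≤ 1 := by
    obtain ⟨b, hb, y, hy, hbc⟩ := (hE.mem_iff c).1 hc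
    nlinarith [hmax hy, (hB.subset_Icc b hb).2, hB.pos, hB.lt_one]
  exact fun x hx => ⟨ha0.trans (hmin hx), (hmax hx).trans hc1⟩

lemma zero_mem (hE : IsDigitAttractor lam B E) (hB : IsOverlapDigitSet lam B) : 0 ∈ E := by
  obtain ⟨a, ha, hmin⟩ := hE.isCompact.exists_isLeast hE.nonempty
  have ha0 := (hE.subset_Icc hB ha).1
  have hle : a ≤ 0 + lam * a := hmin ((hE.mem_iff _).2 ⟨0, hB.zero_mem, a, ha, rfl⟩)
  have : a = 0 := by nlinarith [hB.lt_one]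
  exact this ▸ ha

lemma mem_iff_endpoints (hE : IsDigitAttractor lam B E) (k : ℕ) :
    ∀ x, x ∈ E ↔ ∃ p ∈ endpoints lam B k, ∃ y ∈ E, p + lam ^ k * y = x := by
  induction k with
  | zero => simp [endpoints_zero]
  | succ k ih =>
    intro x
    simp_rw [hE.mem_iff x, endpoints_succ', mem_add_smul]
    constructor
    · rintro ⟨b, hb, w, hw, rfl⟩
      obtain ⟨p, hp, y, hy, rfl⟩ := (ih w).1 hw
      exact ⟨_, ⟨b, hb, p, hp, rfl⟩, y, hy, by ring⟩
    · rintro ⟨_, ⟨b, hb, p, hp, rfl⟩, y, hy, rfl⟩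
      exact ⟨b, hb, p + lam ^ k * y, (ih _).2 ⟨p, hp, y, hy, rfl⟩, by ring⟩

lemma mem_of_mem_endpoints (hE : IsDigitAttractor lam B E) (hB : IsOverlapDigitSet lam B) {k : ℕ}
    {x : ℝ} (hx : x ∈ endpoints lam B k) : x ∈ E :=
  (hE.mem_iff_endpoints k x).2 ⟨x, hx, 0, hE.zero_mem hB, by simp⟩

end IsDigitAttractor

end Attractors

section Mass

open scoped Pointwise

variable {lam : ℝ} {B : Finset ℝ} {E A : Set ℝ} {α L : ℝ} {k : ℕ}

open Classical in
/-- The points of `endpoints lam B q` lying in `A`. -/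
noncomputable def endpointsIn (lam : ℝ) (B : Finset ℝ) (A : Set ℝ) (q : ℕ) : Finset ℝ :=
  {x ∈ endpoints lam B q | x ∈ A}

lemma mem_endpointsIn {q : ℕ} {x : ℝ} :
    x ∈ endpointsIn lam B A q ↔ x ∈ endpoints lam B q ∧ x ∈ A := by
  classical exact Finset.mem_filter

/-- `A` has mass `v` if it contains asymptotically `v * α ^ q` of the points of
`endpoints lam B q`. For a relatively clopen part `A` of the attractor this is, up to a factor, its
Hausdorff measure of dimension `log α / -log lam`. -/
def HasMass (lam : ℝ) (B : Finset ℝ) (α : ℝ) (A : Set ℝ) (v : ℝ) : Prop :=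
  Filter.Tendsto (fun q => ((endpointsIn lam B A q).card : ℝ) / α ^ q) Filter.atTop (nhds v)

lemma HasMass.unique {v w : ℝ} (hv : HasMass lam B α A v) (hw : HasMass lam B α A w) : v = w :=
  tendsto_nhds_unique hv hw

lemma card_endpointsIn_iUnion {ι : Type*} [Fintype ι] {A : ι → Set ℝ}
    (hA : Pairwise (Function.onFun Disjoint A)) (q : ℕ) :
    (endpointsIn lam B (⋃ i, A i) q).card = ∑ i, (endpointsIn lam B (A i) q).card := by
  classical
  have hdisj : ∀ i ∈ Finset.univ, ∀ j ∈ Finset.univ, i ≠ j →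
      Disjoint (endpointsIn lam B (A i) q) (endpointsIn lam B (A j) q) := fun i _ j _ hij =>
    Finset.disjoint_left.2 fun _ hi hj =>
      Set.disjoint_left.1 (hA hij) (mem_endpointsIn.1 hi).2 (mem_endpointsIn.1 hj).2
  rw [← Finset.card_biUnion hdisj]
  congr 1
  ext x
  simp [mem_endpointsIn]

lemma HasMass.iUnion {ι : Type*} [Fintype ι] {A : ι → Set ℝ} {v : ι → ℝ}
    (hA : Pairwise (Function.onFun Disjoint A)) (hv : ∀ i, HasMass lam B α (A i) (v i)) :
    HasMass lam B α (⋃ i, A i) (∑ i, v i) := by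
  simp only [HasMass, card_endpointsIn_iUnion hA, Nat.cast_sum, Finset.sum_div]
  exact tendsto_finsetSum _ fun i _ => hv i

lemma exists_card_sub_one_mul_le_sub {T : Finset ℝ} {g : ℝ} (hT : T.Nonempty)
    (hsep : ∀ s ∈ T, ∀ t ∈ T, s < t → g ≤ t - s) :
    ∃ s ∈ T, ∃ t ∈ T, ((T.card : ℝ) - 1) * g ≤ t - s := by
  induction T using Finset.induction_on_max with
  | empty => exact absurd hT Finset.not_nonempty_empty
  | insert a T ha ih =>
    have haT : a ∉ T := fun h => (ha a h).false
    rcases T.eq_empty_or_nonempty with rfl | hT'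
    · exact ⟨a, by simp, a, by simp, by simp⟩
    · obtain ⟨s, hs, t, ht, hst⟩ := ih hT' fun s hs t ht =>
        hsep s (Finset.mem_insert_of_mem hs) t (Finset.mem_insert_of_mem ht)
      have hta := hsep t (Finset.mem_insert_of_mem ht) a (Finset.mem_insert_self _ _) (ha t ht)
      refine ⟨s, Finset.mem_insert_of_mem hs, a, Finset.mem_insert_self _ _, ?_⟩
      rw [Finset.card_insert_of_notMem haT, Nat.cast_add_one]
      linarith

namespace IsDigitAttractor

lemma add_smul_mem_iff (hE : IsDigitAttractor lam B E) (hB : IsOverlapDigitSet lam B)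
    (hsat : ∀ x ∈ A, ∀ y ∈ E, dist x y ≤ lam ^ k → y ∈ A) {p y : ℝ}
    (hp : p ∈ endpoints lam B k) (hy : y ∈ E) : p + lam ^ k * y ∈ A ↔ p ∈ A := by
  have hpow : 0 < lam ^ k := pow_pos hB.pos k
  obtain ⟨hy0, hy1⟩ := hE.subset_Icc hB hy
  have hdist : dist p (p + lam ^ k * y) ≤ lam ^ k := by
    rw [dist_self_add_right, Real.norm_of_nonneg (mul_nonneg hpow.le hy0)]
    exact mul_le_of_le_one_right hpow.le hy1
  exact ⟨fun h => hsat _ h p (hE.mem_of_mem_endpoints hB hp) (by rwa [dist_comm]),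
    fun h => hsat p h _ ((hE.mem_iff_endpoints k _).2 ⟨p, hp, y, hy, rfl⟩) hdist⟩

lemma endpointsIn_add (hE : IsDigitAttractor lam B E) (hB : IsOverlapDigitSet lam B)
    (hsat : ∀ x ∈ A, ∀ y ∈ E, dist x y ≤ lam ^ k → y ∈ A) (l : ℕ) :
    endpointsIn lam B A (k + l) = endpointsIn lam B A k + lam ^ k • endpoints lam B l := by
  have hiff : ∀ p ∈ endpoints lam B k, ∀ u ∈ endpoints lam B l, (p + lam ^ k * u ∈ A ↔ p ∈ A) :=
    fun p hp u hu => hE.add_smul_mem_iff hB hsat hp (hE.mem_of_mem_endpoints hB hu)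
  ext x
  rw [mem_endpointsIn, endpoints_add, mem_add_smul, mem_add_smul]
  constructor
  · rintro ⟨⟨p, hp, u, hu, rfl⟩, hx⟩
    exact ⟨p, mem_endpointsIn.2 ⟨hp, (hiff p hp u hu).1 hx⟩, u, hu, rfl⟩
  · rintro ⟨p, hpA, u, hu, rfl⟩
    obtain ⟨hp, hpA⟩ := mem_endpointsIn.1 hpA
    exact ⟨⟨p, hp, u, hu, rfl⟩, (hiff p hp u hu).2 hpA⟩

lemma endpointsIn_nonempty (hE : IsDigitAttractor lam B E) (hB : IsOverlapDigitSet lam B)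
    (hAE : A ⊆ E) (hA : A.Nonempty)
    (hsat : ∀ x ∈ A, ∀ y ∈ E, dist x y ≤ lam ^ k → y ∈ A) :
    (endpointsIn lam B A k).Nonempty := by
  obtain ⟨x, hx⟩ := hA
  obtain ⟨p, hp, y, hy, rfl⟩ := (hE.mem_iff_endpoints k x).1 (hAE hx)
  exact ⟨p, mem_endpointsIn.2 ⟨hp, (hE.add_smul_mem_iff hB hsat hp hy).1 hx⟩⟩

end IsDigitAttractor

lemma IsOverlapDigitSet.separated_endpointsIn (hB : IsOverlapDigitSet lam B) (A : Set ℝ) (k : ℕ) :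
    IsOverlapSeparated lam (lam ^ k) (endpointsIn lam B A k) := fun s hs t ht =>
  hB.separated_endpoints k s (mem_endpointsIn.1 hs).1 t (mem_endpointsIn.1 ht).1

lemma IsOverlapDigitSet.card_endpointsIn_le (hB : IsOverlapDigitSet lam B) {D : ℝ}
    (hne : (endpointsIn lam B A k).Nonempty)
    (hdiam : ∀ x ∈ A, ∀ y ∈ A, dist x y ≤ D * lam ^ k) :
    ((endpointsIn lam B A k).card : ℝ) ≤ 2 * D + 1 := by
  have hpow : 0 < lam ^ k := pow_pos hB.pos k
  obtain ⟨s, hs, t, ht, hst⟩ := exists_card_sub_one_mul_le_sub (g := lam ^ k / 2) hne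
    fun s hs t ht hlt => by
      rcases hB.separated_endpointsIn A k s hs t ht hlt with h | h <;> nlinarith [hB.le_half]
  have hle : t - s ≤ D * lam ^ k :=
    (le_abs_self _).trans (hdiam t (mem_endpointsIn.1 ht).2 s (mem_endpointsIn.1 hs).2)
  have := le_of_mul_le_mul_right
    (show (((endpointsIn lam B A k).card : ℝ) - 1) * lam ^ k ≤ 2 * D * lam ^ k by linarith) hpow
  linarith

namespace IsDigitAttractor

lemma hasMass (hE : IsDigitAttractor lam B E) (hB : IsOverlapDigitSet lam B) (hα : α ≠ 0)
    (hL : Filter.Tendsto (fun q => ((endpoints lam B q).card : ℝ) / α ^ q) Filter.atTop (nhds L))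
    (hsat : ∀ x ∈ A, ∀ y ∈ E, dist x y ≤ lam ^ k → y ∈ A) :
    HasMass lam B α A ((((endpointsIn lam B A k).card : ℝ) -
      (overlapStarts lam (lam ^ k) (endpointsIn lam B A k)).card / α) * L / α ^ k) := by
  set T := endpointsIn lam B A k
  set V := overlapStarts lam (lam ^ k) T
  have hcard : ∀ l, ((endpointsIn lam B A (k + (l + 1))).card : ℝ) =
      T.card * (endpoints lam B (l + 1)).card - V.card * (endpoints lam B l).card := by
    intro l
    rw [hE.endpointsIn_add hB hsat, eq_sub_iff_add_eq]
    exact_mod_cast hB.card_add_smul_endpoints (pow_pos hB.pos k) (hB.separated_endpointsIn A k) l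
  have hlim := ((((Filter.tendsto_add_atTop_iff_nat 1).2 hL).const_mul (T.card : ℝ)).sub
    (hL.const_mul ((V.card : ℝ) / α))).div_const (α ^ k)
  rw [HasMass, ← Filter.tendsto_add_atTop_iff_nat (k + 1), sub_mul]
  refine hlim.congr fun l => ?_
  rw [show l + (k + 1) = k + (l + 1) by ring, hcard]
  field_simp
  ring

lemma exists_finite_masses (hE : IsDigitAttractor lam B E) (hB : IsOverlapDigitSet lam B)
    (hα : 1 < α) (hL0 : 0 < L)
    (hL : Filter.Tendsto (fun q => ((endpoints lam B q).card : ℝ) / α ^ q) Filter.atTop (nhds L))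
    (D : ℝ) :
    ∃ S : Set ℝ, S.Finite ∧ (∀ a ∈ S, 0 < a) ∧ ∀ (k : ℕ) (A : Set ℝ), A ⊆ E → A.Nonempty →
      (∀ x ∈ A, ∀ y ∈ E, dist x y ≤ lam ^ k → y ∈ A) →
      (∀ x ∈ A, ∀ y ∈ A, dist x y ≤ D * lam ^ k) →
        ∃ a ∈ S, HasMass lam B α A (a / α ^ k) := by
  have hα0 : 0 < α := one_pos.trans hα
  refine ⟨(fun p : ℕ × ℕ => ((p.1 : ℝ) - p.2 / α) * L) ''
    {p | 0 < p.1 ∧ p.1 ≤ ⌊2 * D + 1⌋₊ ∧ p.2 ≤ p.1}, Set.Finite.image _ ?_, ?_, ?_⟩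
  · exact (Set.finite_Iic (⌊2 * D + 1⌋₊, ⌊2 * D + 1⌋₊)).subset
      fun p ⟨_, hp₁, hp₂⟩ => ⟨hp₁, hp₂.trans hp₁⟩
  · rintro _ ⟨⟨i, j⟩, ⟨hi, -, hji⟩, rfl⟩
    refine mul_pos (sub_pos.2 ?_) hL0
    rw [div_lt_iff₀ hα0]
    calc (j : ℝ) ≤ i := mod_cast hji
      _ < i * α := lt_mul_of_one_lt_right (mod_cast hi) hα
  · intro k A hAE hA hsat hdiam
    have hne := hE.endpointsIn_nonempty hB hAE hA hsat
    exact ⟨_, ⟨(_, _), ⟨hne.card_pos, Nat.le_floor (hB.card_endpointsIn_le hne hdiam),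
      Finset.card_filter_le _ _⟩, rfl⟩, hE.hasMass hB hα0.ne' hL hsat⟩

end IsDigitAttractor

end Mass

section Words

variable {ι : Type*} {x : ι → ℝ} {v R : List ι → ℝ} {α : ℝ}

lemma finite_setOf_zpow_mem_Icc {a b : ℝ} (hα : 1 < α) (ha : 0 < a) :
    {z : ℤ | α ^ z ∈ Set.Icc a b}.Finite := by
  obtain ⟨n, hn⟩ := pow_unbounded_of_one_lt b hα
  obtain ⟨m, hm⟩ := pow_unbounded_of_one_lt a⁻¹ hα
  refine (Set.finite_Icc (-m : ℤ) n).subset fun z hz => ⟨?_, ?_⟩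
  · rw [← zpow_le_zpow_iff_right₀ hα, zpow_neg, zpow_natCast]
    exact (inv_lt_of_inv_lt₀ ha hm).le.trans hz.1
  · rw [← zpow_le_zpow_iff_right₀ hα, zpow_natCast]
    exact hz.2.trans hn.le

lemma finite_mul_zpow_mem_Icc {S : Set ℝ} {a b : ℝ} (hα : 1 < α) (hS : S.Finite)
    (hpos : ∀ s ∈ S, 0 < s) (ha : 0 < a) :
    {y | (∃ s ∈ S, ∃ z : ℤ, s * α ^ z = y) ∧ y ∈ Set.Icc a b}.Finite := by
  refine (hS.biUnion fun s hs => (finite_setOf_zpow_mem_Icc (b := b / s) hα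
    (div_pos ha (hpos s hs))).image (s * α ^ ·)).subset ?_
  rintro _ ⟨⟨s, hs, z, rfl⟩, hle, hge⟩
  refine Set.mem_biUnion hs ⟨z, ⟨?_, ?_⟩, rfl⟩
  · rwa [div_le_iff₀' (hpos s hs)]
  · rwa [le_div_iff₀' (hpos s hs)]

lemma exists_pow_mul_pow_eq_one {S : Set ℝ} {c y : ℝ} (hα : 1 < α) (hc : 0 < c) (hy0 : 0 < y)
    (hy1 : y ≤ 1) (hS : S.Finite) (hmem : ∀ i : ℕ, ∃ a ∈ S, ∃ k : ℕ, c * y ^ i = a / α ^ k) :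
    ∃ p z : ℕ, p ≠ 0 ∧ y ^ p * α ^ z = 1 := by
  have hα0 : 0 < α := one_pos.trans hα
  choose a ha k hak using hmem
  obtain ⟨i, -, l, -, hil, hal⟩ := Set.infinite_univ.exists_lt_map_eq_of_mapsTo
    (fun i _ => ha i) hS
  obtain ⟨p, rfl⟩ := Nat.exists_eq_add_of_lt hil
  have hpow : y ^ (p + 1) * α ^ k (i + p + 1) = α ^ k i := by
    have h₁ := hak i
    have h₂ := hak (i + p + 1)
    rw [eq_div_iff (by positivity)] at h₁ h₂
    have : c * y ^ i * (y ^ (p + 1) * α ^ k (i + p + 1)) = c * y ^ i * α ^ k i := by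
      rw [h₁, hal, ← h₂]; ring
    exact mul_left_cancel₀ (by positivity) this
  have hle : k i ≤ k (i + p + 1) := by
    rw [← pow_le_pow_iff_right₀ hα, ← hpow]
    exact mul_le_of_le_one_left (by positivity) (pow_le_one₀ hy0.le hy1)
  refine ⟨p + 1, k (i + p + 1) - k i, p.succ_ne_zero, ?_⟩
  refine mul_right_cancel₀ (pow_pos hα0 (k i)).ne' ?_
  rw [mul_assoc, ← pow_add, Nat.sub_add_cancel hle, hpow, one_mul]

lemma div_mem_Icc_of_le_prod {c₁ c₂ : ℝ} (hx : ∀ j, 0 < x j) (hc₁ : 0 < c₁)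
    (hlow : ∀ w, c₁ * (w.map x).prod ≤ v w) (hup : ∀ w, v w ≤ c₂ * (w.map x).prod) (j : ι)
    (w : List ι) : v (j :: w) / v w ∈ Set.Icc (c₁ * x j / c₂) (c₂ * x j / c₁) := by
  have hprod : ∀ w : List ι, 0 < (w.map x).prod := fun w => List.prod_pos (by simp [hx])
  have hv0 : ∀ w, 0 < v w := fun w => (mul_pos hc₁ (hprod w)).trans_le (hlow w)
  have hvw := hv0 w
  have hvjw := hv0 (j :: w)
  have hc₂ : 0 < c₂ := pos_of_mul_pos_left (hvw.trans_le (hup w)) (hprod w).le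
  have hlow' := hlow (j :: w)
  have hup' := hup (j :: w)
  rw [List.map_cons, List.prod_cons, ← mul_assoc] at hlow' hup'
  have hxj := hx j
  have hτ := hprod w
  constructor
  · calc c₁ * x j / c₂ = c₁ * x j * (w.map x).prod / (c₂ * (w.map x).prod) := by field_simp
      _ ≤ v (j :: w) / v w := by gcongr; exact hup w
  · calc v (j :: w) / v w ≤ c₂ * x j * (w.map x).prod / (c₁ * (w.map x).prod) := by
          gcongr; exact hlow w
      _ = c₂ * x j / c₁ := by field_simp

lemma finite_setOf_div_of_le_prod {S : Set ℝ} {c₁ c₂ : ℝ} (hx : ∀ j, 0 < x j)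
    (hα : 1 < α) (hS : S.Finite) (hpos : ∀ a ∈ S, 0 < a)
    (hvS : ∀ w, ∃ a ∈ S, ∃ k : ℕ, v w = a / α ^ k) (hc₁ : 0 < c₁)
    (hlow : ∀ w, c₁ * (w.map x).prod ≤ v w) (hup : ∀ w, v w ≤ c₂ * (w.map x).prod) (j : ι) :
    {q | ∃ w, v (j :: w) / v w = q}.Finite := by
  have hα0 : 0 < α := one_pos.trans hα
  have hc₂ : 0 < c₂ := by simpa using (hc₁.trans_le (by simpa using hlow [])).trans_le (hup [])
  refine (finite_mul_zpow_mem_Icc (b := c₂ * x j / c₁) hα (hS.image2 (· / ·) hS) ?_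
    (div_pos (mul_pos hc₁ (hx j)) hc₂)).subset ?_
  · rintro _ ⟨a, ha, a', ha', rfl⟩
    exact div_pos (hpos a ha) (hpos a' ha')
  · rintro _ ⟨w, rfl⟩
    refine ⟨?_, div_mem_Icc_of_le_prod hx hc₁ hlow hup j w⟩
    obtain ⟨a, ha, k, hk⟩ := hvS (j :: w)
    obtain ⟨a', ha', k', hk'⟩ := hvS w
    have := (hpos a' ha').ne'
    refine ⟨a / a', ⟨a, ha, a', ha', rfl⟩, k' - k, ?_⟩
    rw [hk, hk', zpow_sub₀ hα0.ne', zpow_natCast, zpow_natCast]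
    field_simp

variable [Fintype ι]

lemma le_mul_prod_mul_sum_pow {c : ℝ} (hv : ∀ w, v w = ∑ j, v (j :: w))
    (hle : ∀ w, v w ≤ c * (w.map x).prod) (l : ℕ) :
    ∀ w, v w ≤ c * (w.map x).prod * (∑ j, x j) ^ l := by
  induction l with
  | zero => simpa using hle
  | succ l ih =>
    intro w
    calc v w = ∑ j, v (j :: w) := hv w
      _ ≤ ∑ j, c * ((j :: w).map x).prod * (∑ j, x j) ^ l := Finset.sum_le_sum fun j _ => ih _
      _ = ∑ j, x j * (c * (w.map x).prod * (∑ j, x j) ^ l) :=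
        Finset.sum_congr rfl fun j _ => by rw [List.map_cons, List.prod_cons]; ring
      _ = c * (w.map x).prod * (∑ j, x j) ^ (l + 1) := by rw [← Finset.sum_mul]; ring

lemma sum_eq_one_of_additive {c₁ c₂ : ℝ} (hx : ∀ j, 0 ≤ x j) (hc₁ : 0 < c₁)
    (hv : ∀ w, v w = ∑ j, v (j :: w)) (hlow : ∀ w, c₁ * (w.map x).prod ≤ v w)
    (hup : ∀ w, v w ≤ c₂ * (w.map x).prod) : ∑ j, x j = 1 := by
  have hupper : ∀ l : ℕ, v [] ≤ c₂ * (∑ j, x j) ^ l := fun l => by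
    simpa using le_mul_prod_mul_sum_pow hv hup l []
  have hlower : ∀ l : ℕ, c₁ * (∑ j, x j) ^ l ≤ v [] := fun l => by
    simpa using le_mul_prod_mul_sum_pow (v := -v) (c := -c₁) (x := x)
      (fun w => by simp [hv w]) (fun w => by simpa using hlow w) l []
  have hv0 : 0 < v [] := hc₁.trans_le (by simpa using hlow [])
  rcases lt_trichotomy (∑ j, x j) 1 with hlt | heq | hgt
  · have htend := (tendsto_pow_atTop_nhds_zero_of_lt_one
      (Finset.sum_nonneg fun j _ => hx j) hlt).const_mul c₂
    have := ge_of_tendsto' htend hupper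
    linarith
  · exact heq
  · obtain ⟨l, hl⟩ := pow_unbounded_of_one_lt (v [] / c₁) hgt
    rw [div_lt_iff₀' hc₁] at hl
    exact absurd (hlower l) hl.not_ge

lemma exists_forall_append_eq_of_harmonic (hx : ∀ j, 0 < x j) (hsum : ∑ j, x j = 1)
    (hR : ∀ w, R w = ∑ j, x j * R (j :: w)) (hpos : ∀ w, 0 < R w)
    (hbdd : BddAbove (Set.range R)) (hfin : {q | ∃ j w, R (j :: w) / R w = q}.Finite) :
    ∃ w₀, ∀ u, R (u ++ w₀) = R w₀ := by
  obtain ⟨θ, hθ, hθ1⟩ : ∃ θ : ℝ, (∀ q ∈ {q | ∃ j w, R (j :: w) / R w = q}, 1 < q → θ ≤ q) ∧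
      1 < θ := by
    have hev : ∀ q : ℝ, ∀ᶠ θ in nhdsWithin 1 (Set.Ioi 1), 1 < q → θ ≤ q := fun q => by
      by_cases hq : 1 < q
      · filter_upwards [Ioc_mem_nhdsGT hq] with θ hθ _ using hθ.2
      · simp [hq]
    exact (((Filter.eventually_all_finite hfin).2 fun q _ => hev q).and
      self_mem_nhdsWithin).exists
  have hM : ∀ w, R w ≤ sSup (Set.range R) := fun w => le_csSup hbdd ⟨w, rfl⟩
  have hlt : sSup (Set.range R) / θ < sSup (Set.range R) :=
    div_lt_self ((hpos []).trans_le (hM [])) hθ1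
  obtain ⟨_, ⟨w₀, rfl⟩, hw₀⟩ := exists_lt_of_lt_csSup (Set.range_nonempty R) hlt
  -- A value within a factor `θ` of the supremum cannot grow, hence by harmonicity is reproduced by
  -- all its children.
  have hle : ∀ w, R w = R w₀ → ∀ j, R (j :: w) ≤ R w := by
    intro w hw j
    by_contra! hgrow
    have := hθ _ ⟨j, w, rfl⟩ ((one_lt_div (hpos w)).2 hgrow)
    rw [le_div_iff₀ (hpos w), hw] at this
    rw [div_lt_iff₀' (by linarith)] at hw₀
    exact absurd (hM (j :: w)) (hw₀.trans_le this).not_ge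
  have hcons : ∀ w, R w = R w₀ → ∀ j, R (j :: w) = R w := by
    intro w hw j
    have hmean : ∑ j, x j * R (j :: w) = ∑ j, x j * R w := by
      rw [← hR w, ← Finset.sum_mul, hsum, one_mul]
    exact mul_left_cancel₀ (hx j).ne' ((Finset.sum_eq_sum_iff_of_le fun j _ =>
      mul_le_mul_of_nonneg_left (hle w hw j) (hx j).le).1 hmean j (Finset.mem_univ j))
  refine ⟨w₀, fun u => ?_⟩
  induction u with
  | nil => rfl
  | cons j u ih => exact (hcons _ ih j).trans ih

lemma exists_forall_append_eq_prod_mul {S : Set ℝ} {c₁ c₂ : ℝ} (hx : ∀ j, 0 < x j) (hα : 1 < α)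
    (hS : S.Finite) (hpos : ∀ a ∈ S, 0 < a) (hv : ∀ w, v w = ∑ j, v (j :: w))
    (hvS : ∀ w, ∃ a ∈ S, ∃ k : ℕ, v w = a / α ^ k) (hc₁ : 0 < c₁)
    (hlow : ∀ w, c₁ * (w.map x).prod ≤ v w) (hup : ∀ w, v w ≤ c₂ * (w.map x).prod) :
    ∃ w₀, ∀ u, v (u ++ w₀) = (u.map x).prod * v w₀ := by
  have hprod : ∀ w : List ι, 0 < (w.map x).prod := fun w => List.prod_pos (by simp [hx])
  have hv0 : ∀ w, 0 < v w := fun w => (mul_pos hc₁ (hprod w)).trans_le (hlow w)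
  have hcons : ∀ j w, v (j :: w) / ((j :: w).map x).prod =
      v (j :: w) / (w.map x).prod / x j := fun j w => by
    rw [List.map_cons, List.prod_cons, div_div, mul_comm]
  have hquot : {q | ∃ j w, v (j :: w) / ((j :: w).map x).prod /
      (v w / (w.map x).prod) = q}.Finite := by
    refine (Set.finite_iUnion fun j => (finite_setOf_div_of_le_prod hx hα hS hpos hvS hc₁ hlow
      hup j).image (· / x j)).subset ?_
    rintro _ ⟨j, w, rfl⟩
    refine Set.mem_iUnion.2 ⟨j, _, ⟨w, rfl⟩, ?_⟩
    simp only [hcons]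
    rw [div_right_comm _ (x j), div_div_div_cancel_right₀ (hprod w).ne', div_right_comm]
  obtain ⟨w₀, hw₀⟩ := exists_forall_append_eq_of_harmonic
    (R := fun w => v w / (w.map x).prod) hx
    (sum_eq_one_of_additive (fun j => (hx j).le) hc₁ hv hlow hup)
    (fun w => by simp only [hcons, mul_div_cancel₀ _ (hx _).ne', ← Finset.sum_div, ← hv])
    (fun w => div_pos (hv0 w) (hprod w))
    ⟨c₂, by rintro _ ⟨w, rfl⟩; exact (div_le_iff₀ (hprod w)).2 (hup w)⟩ hquot
  refine ⟨w₀, fun u => ?_⟩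
  have h := hw₀ u
  simp only [List.map_append, List.prod_append] at h
  rw [div_eq_div_iff (mul_pos (hprod u) (hprod w₀)).ne' (hprod w₀).ne'] at h
  refine mul_right_cancel₀ (hprod w₀).ne' (h.trans ?_)
  ring

theorem exists_pow_mul_pow_eq_one_of_additive {S : Set ℝ} {c₁ c₂ : ℝ} (hx : ∀ j, 0 < x j)
    (hα : 1 < α) (hS : S.Finite) (hpos : ∀ a ∈ S, 0 < a) (hv : ∀ w, v w = ∑ j, v (j :: w))
    (hvS : ∀ w, ∃ a ∈ S, ∃ k : ℕ, v w = a / α ^ k) (hc₁ : 0 < c₁)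
    (hlow : ∀ w, c₁ * (w.map x).prod ≤ v w) (hup : ∀ w, v w ≤ c₂ * (w.map x).prod) (j : ι) :
    ∃ p z : ℕ, p ≠ 0 ∧ x j ^ p * α ^ z = 1 := by
  obtain ⟨w₀, hw₀⟩ := exists_forall_append_eq_prod_mul hx hα hS hpos hv hvS hc₁ hlow hup
  have hv0 : 0 < v w₀ :=
    (mul_pos hc₁ (List.prod_pos (by simp [hx]))).trans_le (hlow w₀)
  have hle : x j ≤ 1 := by
    rw [← sum_eq_one_of_additive (fun j => (hx j).le) hc₁ hv hlow hup]
    exact Finset.single_le_sum (fun j _ => (hx j).le) (Finset.mem_univ j)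
  refine exists_pow_mul_pow_eq_one hα hv0 (hx j) hle hS fun i => ?_
  obtain ⟨a, ha, k, hk⟩ := hvS (List.replicate i j ++ w₀)
  refine ⟨a, ha, k, ?_⟩
  rw [← hk, hw₀, List.map_replicate, List.prod_replicate, mul_comm]

end Words

section DustTrees

variable {ι X Y : Type*}

/-- The composition of the maps `g j` along a word, the head of the word being applied first, so
that prolonging a word by `List.cons` refines the corresponding piece of the attractor. -/
def wordMap (g : ι → Y → Y) (w : List ι) (y : Y) : Y :=
  w.foldl (fun y j => g j y) y

lemma image_wordMap_cons (g : ι → Y → Y) (F : Set Y) (j : ι) (w : List ι) :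
    wordMap g (j :: w) '' F = wordMap g w '' (g j '' F) :=
  Set.image_comp (wordMap g w) (g j) F

variable [MetricSpace X] [MetricSpace Y]

/-- `F` is the attractor of the similitudes `g j` with ratios `r j`, whose images of `F` are
pairwise disjoint. -/
structure IsDustSystem (g : ι → Y → Y) (r : ι → ℝ) (F : Set Y) : Prop where
  nonempty : F.Nonempty
  isCompact : IsCompact F
  ratio_mem : ∀ j, r j ∈ Set.Ioo (0 : ℝ) 1
  dist_eq : ∀ j x y, dist (g j x) (g j y) = r j * dist x y
  eq_iUnion : F = ⋃ j, g j '' F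
  disjoint : Pairwise fun i j => Disjoint (g i '' F) (g j '' F)

/-- A tree of pieces `A w` of `E` which behaves like the cylinder sets of a dust-like self-similar
set with ratios `r`: up to constants, the product of the ratios along `w` bounds the diameter of
`A w` from above and its distance from the rest of `E` from below. Unlike self-similarity, this
structure is a Lipschitz invariant. -/
structure IsDustTree (r : ι → ℝ) (κ D : ℝ) (E : Set X) (A : List ι → Set X) : Prop where
  pos : 0 < κ
  ratio_mem : ∀ j, r j ∈ Set.Ioo (0 : ℝ) 1
  subset : ∀ w, A w ⊆ E
  nonempty : ∀ w, (A w).Nonempty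
  eq_iUnion : ∀ w, A w = ⋃ j, A (j :: w)
  disjoint : ∀ w, Pairwise fun i j => Disjoint (A (i :: w)) (A (j :: w))
  dist_le : ∀ w, ∀ x ∈ A w, ∀ y ∈ A w, dist x y ≤ D * (w.map r).prod
  le_dist : ∀ w, ∀ x ∈ A w, ∀ y ∈ E, y ∉ A w → κ * (w.map r).prod ≤ dist x y

lemma exists_pos_forall_le_dist_of_pairwise_disjoint [Finite ι] {K : ι → Set Y}
    (hK : ∀ i, IsCompact (K i)) (hdisj : Pairwise fun i j => Disjoint (K i) (K j)) :
    ∃ δ : ℝ, 0 < δ ∧ ∀ i j, i ≠ j → ∀ x ∈ K i, ∀ y ∈ K j, δ ≤ dist x y := by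
  have hev : ∀ i j, ∀ᶠ δ : ℝ in nhdsWithin 0 (Set.Ioi 0),
      i ≠ j → ∀ x ∈ K i, ∀ y ∈ K j, δ ≤ dist x y := fun i j => by
    by_cases hij : i = j
    · simp [hij]
    obtain ⟨δ, hδ, hlt⟩ := Metric.exists_pos_forall_lt_edist (hK i) (hK j).isClosed (hdisj hij)
    filter_upwards [Ioc_mem_nhdsGT (NNReal.coe_pos.2 hδ)] with ε hε _ x hx y hy
    have h := hlt x hx y hy
    rw [edist_nndist, ENNReal.coe_lt_coe] at h
    exact hε.2.trans (NNReal.coe_le_coe.2 h.le)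
  obtain ⟨δ, hδ, hδ0⟩ := ((Filter.eventually_all.2 fun i => Filter.eventually_all.2 (hev i)).and
    self_mem_nhdsWithin).exists
  exact ⟨δ, hδ0, hδ⟩

namespace IsDustSystem

variable {g : ι → Y → Y} {r : ι → ℝ} {F : Set Y}

lemma dist_wordMap (hF : IsDustSystem g r F) (w : List ι) (x y : Y) :
    dist (wordMap g w x) (wordMap g w y) = (w.map r).prod * dist x y := by
  induction w generalizing x y with
  | nil => simp [wordMap]
  | cons j w ih =>
    rw [List.map_cons, List.prod_cons, mul_comm (r j), mul_assoc, ← hF.dist_eq]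
    exact ih _ _

lemma prod_pos (hF : IsDustSystem g r F) (w : List ι) : 0 < (w.map r).prod :=
  List.prod_pos (by simpa using fun j _ => (hF.ratio_mem j).1)

lemma wordMap_injective (hF : IsDustSystem g r F) (w : List ι) :
    Function.Injective (wordMap g w) := fun x y hxy => by
  rw [← dist_eq_zero, hF.dist_wordMap] at hxy
  exact dist_eq_zero.1 ((mul_eq_zero.1 hxy).resolve_left (hF.prod_pos w).ne')

lemma image_wordMap_eq_iUnion (hF : IsDustSystem g r F) (w : List ι) :
    wordMap g w '' F = ⋃ j, wordMap g (j :: w) '' F := by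
  simp only [image_wordMap_cons, ← Set.image_iUnion, ← hF.eq_iUnion]

lemma image_wordMap_subset (hF : IsDustSystem g r F) (w : List ι) : wordMap g w '' F ⊆ F := by
  induction w with
  | nil => exact (Set.image_id F).subset
  | cons j w ih =>
    rw [hF.image_wordMap_eq_iUnion] at ih
    exact (Set.subset_iUnion _ j).trans ih

lemma le_dist_of_notMem_image_wordMap (hF : IsDustSystem g r F) {δ : ℝ} (hδ : 0 ≤ δ)
    (hsep : ∀ i j, i ≠ j → ∀ x ∈ g i '' F, ∀ y ∈ g j '' F, δ ≤ dist x y) (w : List ι) :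
    ∀ x ∈ wordMap g w '' F, ∀ y ∈ F, y ∉ wordMap g w '' F → δ * (w.map r).prod ≤ dist x y := by
  induction w with
  | nil => exact fun x _ y hy hyF => absurd ((Set.image_id F).ge hy) hyF
  | cons j w ih =>
    intro x hx y hy hyj
    have hle : δ * ((j :: w).map r).prod ≤ δ * (w.map r).prod := by
      rw [List.map_cons, List.prod_cons]
      exact mul_le_mul_of_nonneg_left
        (mul_le_of_le_one_left (hF.prod_pos w).le (hF.ratio_mem j).2.le) hδ
    refine hle.trans ?_
    by_cases hyw : y ∈ wordMap g w '' F
    · rw [hF.image_wordMap_eq_iUnion] at hyw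
      obtain ⟨i, hi⟩ := Set.mem_iUnion.1 hyw
      have hij : j ≠ i := fun h => hyj (h ▸ hi)
      rw [image_wordMap_cons] at hx hi
      obtain ⟨x', hx', rfl⟩ := hx
      obtain ⟨y', hy', rfl⟩ := hi
      rw [hF.dist_wordMap, mul_comm]
      exact mul_le_mul_of_nonneg_left (hsep j i hij x' hx' y' hy') (hF.prod_pos w).le
    · refine ih x ?_ y hy hyw
      rw [hF.image_wordMap_eq_iUnion]
      exact Set.mem_iUnion.2 ⟨j, hx⟩

theorem exists_isDustTree [Finite ι] (hF : IsDustSystem g r F) :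
    ∃ κ, IsDustTree r κ (Metric.diam F) F fun w => wordMap g w '' F := by
  have hcont : ∀ j, Continuous (g j) := fun j =>
    (LipschitzWith.of_dist_le_mul (K := ⟨r j, (hF.ratio_mem j).1.le⟩)
      fun x y => (hF.dist_eq j x y).le).continuous
  obtain ⟨δ, hδ, hsep⟩ := exists_pos_forall_le_dist_of_pairwise_disjoint
    (fun j => hF.isCompact.image (hcont j)) hF.disjoint
  refine ⟨δ, hδ, hF.ratio_mem, hF.image_wordMap_subset, fun w => hF.nonempty.image _,
    hF.image_wordMap_eq_iUnion, fun w i j hij => ?_, fun w => ?_,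
    hF.le_dist_of_notMem_image_wordMap hδ.le hsep⟩
  · simp only [image_wordMap_cons]
    exact Set.disjoint_image_of_injective (hF.wordMap_injective w) (hF.disjoint hij)
  · rintro _ ⟨x, hx, rfl⟩ _ ⟨y, hy, rfl⟩
    rw [hF.dist_wordMap, mul_comm]
    exact mul_le_mul_of_nonneg_right (Metric.dist_le_diam_of_mem hF.isCompact.isBounded hx hy)
      (hF.prod_pos w).le

end IsDustSystem

namespace IsDustTree

variable {r : ι → ℝ} {κ D : ℝ}

lemma prod_pos {E : Set X} {A : List ι → Set X} (hA : IsDustTree r κ D E A) (w : List ι) :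
    0 < (w.map r).prod :=
  List.prod_pos (by simpa using fun j _ => (hA.ratio_mem j).1)

lemma prod_le_one {E : Set X} {A : List ι → Set X} (hA : IsDustTree r κ D E A) (w : List ι) :
    (w.map r).prod ≤ 1 := by
  induction w with
  | nil => simp
  | cons j w ih =>
    rw [List.map_cons, List.prod_cons]
    exact mul_le_one₀ (hA.ratio_mem j).2.le (hA.prod_pos w).le ih

theorem exists_of_lipEquiv {E : Set X} {F : Set Y} {A : List ι → Set Y}
    (hA : IsDustTree r κ D F A) (hEF : LipEquiv E F) :
    ∃ κ' D' A', IsDustTree r κ' D' E A' := by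
  obtain ⟨f, hf, C, hC, hlip⟩ := hEF
  refine ⟨κ / C, C * D, fun w => Subtype.val '' {x : E | (f x : Y) ∈ A w}, div_pos hA.pos hC,
    hA.ratio_mem, fun w => Subtype.coe_image_subset _ _, fun w => ?_, fun w => ?_,
    fun w i j hij => ?_, fun w => ?_, fun w => ?_⟩
  · obtain ⟨y, hy⟩ := hA.nonempty w
    obtain ⟨x, hx⟩ := hf.surjective ⟨y, hA.subset w hy⟩
    exact ⟨x, x, by simpa [hx] using hy, rfl⟩
  · rw [← Set.image_iUnion, hA.eq_iUnion w]
    congr 1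
    ext x
    simp
  · exact Set.disjoint_image_of_injective Subtype.val_injective
      ((hA.disjoint w hij).preimage fun x : E => (f x : Y))
  · rintro _ ⟨x, hx, rfl⟩ _ ⟨y, hy, rfl⟩
    rw [mul_assoc, ← inv_mul_le_iff₀ hC]
    exact (hlip x y).1.trans (hA.dist_le w _ hx _ hy)
  · rintro _ ⟨x, hx, rfl⟩ y hy hyA
    rw [div_mul_eq_mul_div, div_le_iff₀' hC]
    refine (hA.le_dist w _ hx (f ⟨y, hy⟩) (f ⟨y, hy⟩).2 fun h => ?_).trans (hlip x ⟨y, hy⟩).2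
    exact hyA ⟨⟨y, hy⟩, h, rfl⟩

end IsDustTree

lemma exists_pow_lt_and_le_pow {lam κ : ℝ} (h0 : 0 < lam) (h1 : lam < 1) (hκ : 0 < κ) :
    ∃ c : ℝ, 0 < c ∧ ∀ ρ : ℝ, 0 < ρ → ρ ≤ 1 → ∃ k : ℕ, lam ^ k < κ * ρ ∧ c * ρ ≤ lam ^ k := by
  refine ⟨lam * min κ 1, by positivity, fun ρ hρ0 hρ1 => ?_⟩
  obtain ⟨k, hlt, hle⟩ := exists_nat_pow_near_of_lt_one (x := min κ 1 * ρ) (by positivity)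
    (mul_le_one₀ (min_le_right _ _) hρ0.le hρ1) h0 h1
  refine ⟨k + 1, hlt.trans_le (by gcongr; exact min_le_left _ _), ?_⟩
  rw [pow_succ', mul_assoc]
  gcongr

lemma exists_rpow_eq_inv {lam α : ℝ} (h0 : 0 < lam) (h1 : lam < 1) (hα : 1 < α) :
    ∃ s : ℝ, 0 < s ∧ lam ^ s = α⁻¹ :=
  ⟨-Real.logb lam α, neg_pos.2 (Real.logb_neg_of_base_lt_one h0 h1 hα), by
    rw [Real.rpow_neg h0.le, Real.rpow_logb h0 h1.ne (one_pos.trans hα)]⟩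

lemma exists_pos_forall_mem_Icc {S : Set ℝ} (hS : S.Finite) (hpos : ∀ a ∈ S, 0 < a) :
    ∃ a₁ a₂ : ℝ, 0 < a₁ ∧ S ⊆ Set.Icc a₁ a₂ := by
  obtain ⟨a₂, ha₂⟩ := hS.bddAbove
  obtain ⟨a₁, ha₁, ha₁0⟩ := (((Filter.eventually_all_finite hS).2 fun a ha =>
    Filter.eventually_of_mem (Ioc_mem_nhdsGT (hpos a ha)) fun _ h => h.2).and
      self_mem_nhdsWithin).exists
  exact ⟨a₁, a₂, ha₁0, fun a ha => ⟨ha₁ a ha, ha₂ ha⟩⟩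

namespace IsDustTree

variable {lam κ D α L : ℝ} {B : Finset ℝ} {E : Set ℝ} {r : ι → ℝ} {A : List ι → Set ℝ}

lemma exists_finite_masses (hA : IsDustTree r κ D E A) (hE : IsDigitAttractor lam B E)
    (hB : IsOverlapDigitSet lam B) (hα : 1 < α) (hL0 : 0 < L)
    (hL : Filter.Tendsto (fun q => ((endpoints lam B q).card : ℝ) / α ^ q) Filter.atTop
      (nhds L)) :
    ∃ S : Set ℝ, S.Finite ∧ (∀ a ∈ S, 0 < a) ∧ ∃ c : ℝ, 0 < c ∧ ∀ w, ∃ a ∈ S, ∃ k : ℕ,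
      HasMass lam B α (A w) (a / α ^ k) ∧
        c * (w.map r).prod ≤ lam ^ k ∧ lam ^ k ≤ κ * (w.map r).prod := by
  obtain ⟨c, hc, hscale⟩ := exists_pow_lt_and_le_pow hB.pos hB.lt_one hA.pos
  obtain ⟨S, hS, hpos, hmass⟩ := hE.exists_finite_masses hB hα hL0 hL (D / c)
  refine ⟨S, hS, hpos, c, hc, fun w => ?_⟩
  obtain ⟨k, hlt, hle⟩ := hscale _ (hA.prod_pos w) (hA.prod_le_one w)
  have hsat : ∀ x ∈ A w, ∀ y ∈ E, dist x y ≤ lam ^ k → y ∈ A w := fun x hx y hy hxy => by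
    by_contra hyA
    exact ((hA.le_dist w x hx y hy hyA).trans hxy).not_gt hlt
  have hD : 0 ≤ D := by
    obtain ⟨x, hx⟩ := hA.nonempty []
    simpa using hA.dist_le [] x hx x hx
  have hdiam : ∀ x ∈ A w, ∀ y ∈ A w, dist x y ≤ D / c * lam ^ k := fun x hx y hy =>
    calc dist x y ≤ D * (w.map r).prod := hA.dist_le w x hx y hy
      _ = D / c * (c * (w.map r).prod) := by field_simp
      _ ≤ D / c * lam ^ k := by gcongr
  obtain ⟨a, ha, hak⟩ := hmass k (A w) (hA.subset w) (hA.nonempty w) hsat hdiam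
  exact ⟨a, ha, k, hak, hle, hlt.le⟩

lemma exists_additive [Fintype ι] (hA : IsDustTree r κ D E A) (hE : IsDigitAttractor lam B E)
    (hB : IsOverlapDigitSet lam B) (hα : 1 < α) (hL0 : 0 < L)
    (hL : Filter.Tendsto (fun q => ((endpoints lam B q).card : ℝ) / α ^ q) Filter.atTop
      (nhds L)) :
    ∃ (s c₁ c₂ : ℝ) (S : Set ℝ) (v : List ι → ℝ), S.Finite ∧ (∀ a ∈ S, 0 < a) ∧ 0 < c₁ ∧
      (∀ w, v w = ∑ j, v (j :: w)) ∧ (∀ w, ∃ a ∈ S, ∃ k : ℕ, v w = a / α ^ k) ∧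
      ∀ w, c₁ * (w.map fun j => r j ^ s).prod ≤ v w ∧
        v w ≤ c₂ * (w.map fun j => r j ^ s).prod := by
  obtain ⟨s, hs, hlams⟩ := exists_rpow_eq_inv hB.pos hB.lt_one hα
  obtain ⟨S, hS, hpos, c, hc, hmass⟩ := hA.exists_finite_masses hE hB hα hL0 hL
  obtain ⟨a₁, a₂, ha₁, hSsub⟩ := exists_pos_forall_mem_Icc hS hpos
  choose a ha k hak hlow hup using hmass
  have hadd : ∀ w, a w / α ^ k w = ∑ j, a (j :: w) / α ^ k (j :: w) := fun w => by
    refine (hak w).unique ?_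
    rw [hA.eq_iUnion w]
    exact HasMass.iUnion (hA.disjoint w) fun j => hak (j :: w)
  have hprod : ∀ w : List ι, (w.map fun j => r j ^ s).prod = (w.map r).prod ^ s := fun w =>
    Real.list_prod_map_rpow' w r (fun j _ => (hA.ratio_mem j).1.le) s
  have hpow : ∀ i : ℕ, (lam ^ i) ^ s = (α ^ i)⁻¹ := fun i => by
    rw [← Real.rpow_natCast_mul hB.pos.le, mul_comm, Real.rpow_mul_natCast hB.pos.le, hlams,
      inv_pow]
  refine ⟨s, a₁ * c ^ s, a₂ * κ ^ s, S, fun w => a w / α ^ k w, hS, hpos,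
    mul_pos ha₁ (Real.rpow_pos_of_pos hc s), hadd, fun w => ⟨a w, ha w, k w, rfl⟩, fun w => ?_⟩
  have ha0 := hpos _ (ha w)
  obtain ⟨hle₁, hle₂⟩ := hSsub (ha w)
  have hr0 := hA.prod_pos w
  have hlam0 := pow_pos hB.pos (k w)
  have hup' := hup w
  beta_reduce
  rw [hprod, mul_assoc, mul_assoc, ← Real.mul_rpow hc.le hr0.le, ← Real.mul_rpow hA.pos.le hr0.le,
    div_eq_mul_inv, ← hpow]
  constructor
  · gcongr
    exact hlow w
  · gcongr
    exact ha0.le.trans hle₂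

/-- The weights are `r j ^ s`, with `s` the common Hausdorff dimension of `E` and of the tree. -/
theorem exists_weights [Fintype ι] (hA : IsDustTree r κ D E A) (hE : IsDigitAttractor lam B E)
    (hB : IsOverlapDigitSet lam B) (hα : 1 < α) (hL0 : 0 < L)
    (hL : Filter.Tendsto (fun q => ((endpoints lam B q).card : ℝ) / α ^ q) Filter.atTop
      (nhds L)) :
    ∃ x : ι → ℝ, (∀ j, 0 < x j) ∧ ∑ j, x j = 1 ∧
      ∀ j, ∃ p z : ℕ, p ≠ 0 ∧ x j ^ p * α ^ z = 1 := by
  obtain ⟨s, c₁, c₂, S, v, hS, hpos, hc₁, hadd, hvS, hv⟩ := hA.exists_additive hE hB hα hL0 hL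
  have hx : ∀ j, 0 < r j ^ s := fun j => Real.rpow_pos_of_pos (hA.ratio_mem j).1 s
  exact ⟨fun j => r j ^ s, hx,
    sum_eq_one_of_additive (fun j => (hx j).le) hc₁ hadd (fun w => (hv w).1) fun w => (hv w).2,
    exists_pow_mul_pow_eq_one_of_additive hx hα hS hpos hadd hvS hc₁ (fun w => (hv w).1)
      fun w => (hv w).2⟩

end IsDustTree

end DustTrees

section Conjugates

lemma exists_add_eq_mul_eq_of_add_one_lt {s p : ℝ} (hp : 0 < p) (hs : p + 1 < s) :
    ∃ α β : ℝ, α + β = s ∧ α * β = p ∧ β ∈ Set.Ioo 0 1 ∧ 1 < α := by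
  have hdisc : (s - 2) ^ 2 < s ^ 2 - 4 * p := by linarith
  have hsq := Real.sq_sqrt ((sq_nonneg _).trans hdisc.le)
  have hlow : |s - 2| < √(s ^ 2 - 4 * p) := by
    rw [← Real.sqrt_sq_eq_abs]
    exact Real.sqrt_lt_sqrt (sq_nonneg _) hdisc
  have hup : √(s ^ 2 - 4 * p) < s := (Real.sqrt_lt' (by linarith)).2 (by linarith)
  have := abs_lt.1 hlow
  exact ⟨(s + √(s ^ 2 - 4 * p)) / 2, (s - √(s ^ 2 - 4 * p)) / 2, by ring, by linarith,
    ⟨by linarith, by linarith⟩, by linarith⟩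

lemma exists_pos_pow_eq {a : ℝ} (ha : 0 < a) {k : ℕ} (hk : k ≠ 0) : ∃ y : ℝ, 0 < y ∧ y ^ k = a :=
  ⟨a ^ (k : ℝ)⁻¹, Real.rpow_pos_of_pos ha _, Real.rpow_inv_natCast_pow ha.le hk⟩

section

variable {R : Type*} [CommRing R]

lemma monic_X_sq_sub_add (s p : R) : (X ^ 2 - C s * X + C p).Monic := by
  monicity!

lemma aeval_X_sq_sub_add_eq_zero {A : Type*} [CommRing A] [Algebra R A] {s p : R} {α β : A}
    (hadd : α + β = algebraMap R A s) (hmul : α * β = algebraMap R A p) :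
    aeval α (X ^ 2 - C s * X + C p) = 0 := by
  simp only [map_add, map_sub, map_mul, map_pow, aeval_X, aeval_C, ← hadd, ← hmul]
  ring

lemma aeval_X_pow_sub_sum_X_pow {ι A : Type*} [Fintype ι] [Field A] [Algebra R A] (e : ι → ℕ)
    {y : A} (hy : y ≠ 0) :
    aeval y (X ^ (∑ i, e i) - ∑ j, X ^ (∑ i, e i - e j) : R[X]) =
      y ^ (∑ i, e i) * (1 - ∑ j, (y ^ e j)⁻¹) := by
  have hle : ∀ j, e j ≤ ∑ i, e i := fun j =>
    Finset.single_le_sum (fun _ _ => Nat.zero_le _) (Finset.mem_univ j)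
  simp only [map_sub, map_sum, map_pow, aeval_X, mul_sub, mul_one, Finset.mul_sum,
    pow_sub₀ y hy (hle _)]

variable [IsDomain R] [IsIntegrallyClosed R]

lemma dvd_of_irreducible_of_aeval_eq_zero {A : Type*} [CommRing A] [IsDomain A] [Algebra R A]
    [Module.IsTorsionFree R A] {P Q : R[X]} {y : A} (hP : Irreducible P) (hmonic : P.Monic)
    (hPy : aeval y P = 0) (hQy : aeval y Q = 0) : P ∣ Q := by
  have hint : IsIntegral R y := ⟨P, hmonic, hPy⟩
  have hassoc : Associated P (minpoly R y) :=
    (hP.dvd_iff.1 (minpoly.isIntegrallyClosed_dvd hint hPy)).resolve_left (minpoly.not_isUnit R y)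
  exact hassoc.dvd.trans (minpoly.isIntegrallyClosed_dvd hint hQy)

lemma sum_inv_pow_eq_one_of_irreducible {ι A : Type*} [Fintype ι] [Field A] [Algebra R A]
    [Module.IsTorsionFree R A] {P : R[X]} (hP : Irreducible P) (hmonic : P.Monic) {y y' : A}
    (hy : y ≠ 0) (hy' : y' ≠ 0) (hPy : aeval y P = 0) (hPy' : aeval y' P = 0) {e : ι → ℕ}
    (hsum : ∑ j, (y ^ e j)⁻¹ = 1) : ∑ j, (y' ^ e j)⁻¹ = 1 := by
  obtain ⟨Q, hQ⟩ := dvd_of_irreducible_of_aeval_eq_zero hP hmonic hPy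
    (Q := X ^ (∑ i, e i) - ∑ j, X ^ (∑ i, e i - e j))
    (by rw [aeval_X_pow_sub_sum_X_pow e hy, hsum, sub_self, mul_zero])
  have hroot := aeval_X_pow_sub_sum_X_pow (R := R) e hy'
  rw [hQ, map_mul, hPy', zero_mul] at hroot
  have := (mul_eq_zero.1 hroot.symm).resolve_left (pow_ne_zero _ hy')
  exact (sub_eq_zero.1 this).symm

end

variable {ι : Type*} {x : ι → ℝ} {α : ℝ}

lemma exists_eq_inv_pow_of_pow_mul_pow_eq_one [Finite ι] (hα : 0 < α) (hx : ∀ j, 0 ≤ x j)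
    (hrat : ∀ j, ∃ p z : ℕ, p ≠ 0 ∧ x j ^ p * α ^ z = 1) :
    ∃ k : ℕ, 2 ≤ k ∧ ∃ y : ℝ, 0 < y ∧ y ^ k = α ∧ ∃ e : ι → ℕ, ∀ j, x j = (y ^ e j)⁻¹ := by
  have := Fintype.ofFinite ι
  choose p z hp hpz using hrat
  have hprod : 0 < ∏ j, p j := Finset.prod_pos fun j _ => (hp j).bot_lt
  obtain ⟨y, hy, hyk⟩ := exists_pos_pow_eq hα (k := 2 * ∏ j, p j) (by lia)
  have hdvd : ∀ j, p j ∣ 2 * ∏ i, p i := fun j =>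
    (Finset.dvd_prod_of_mem p (Finset.mem_univ j)).mul_left 2
  choose q hq using hdvd
  refine ⟨2 * ∏ j, p j, by lia, y, hy, hyk, fun j => q j * z j, fun j => ?_⟩
  have hpow : (x j * y ^ (q j * z j)) ^ p j = 1 := by
    rw [mul_pow, ← pow_mul, show q j * z j * p j = p j * q j * z j by ring, ← hq, pow_mul, hyk,
      hpz]
  exact eq_inv_of_mul_eq_one_left
    ((pow_eq_one_iff_of_nonneg (mul_nonneg (hx j) (pow_pos hy _).le) (hp j)).1 hpow)

theorem exists_not_irreducible_expand [Fintype ι] [Nontrivial ι] {P : ℤ[X]} (hP : P.Monic) {β : ℝ}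
    (hα : 0 < α) (hβ : β ∈ Set.Ioo 0 1) (hPα : aeval α P = 0) (hPβ : aeval β P = 0)
    (hx : ∀ j, 0 ≤ x j) (hsum : ∑ j, x j = 1)
    (hrat : ∀ j, ∃ p z : ℕ, p ≠ 0 ∧ x j ^ p * α ^ z = 1) :
    ∃ k : ℕ, 2 ≤ k ∧ ¬ Irreducible (expand ℤ k P) := by
  obtain ⟨k, hk, y, hy, rfl, e, he⟩ := exists_eq_inv_pow_of_pow_mul_pow_eq_one hα hx hrat
  have hk0 : k ≠ 0 := by lia
  refine ⟨k, hk, fun hirr => ?_⟩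
  obtain ⟨y', hy', rfl⟩ := exists_pos_pow_eq hβ.1 hk0
  have hsum' : ∑ j, (y' ^ e j)⁻¹ = 1 :=
    sum_inv_pow_eq_one_of_irreducible hirr (hP.expand hk0.bot_lt) hy.ne' hy'.ne'
      ((expand_aeval k P y).trans hPα) ((expand_aeval k P y').trans hPβ) (by simpa [he] using hsum)
  have hy'1 : y' ≤ 1 := ((pow_lt_one_iff_of_nonneg hy'.le hk0).1 hβ.2).le
  have hone : ∀ j, 1 ≤ (y' ^ e j)⁻¹ := fun j =>
    (one_le_inv₀ (pow_pos hy' _)).2 (pow_le_one₀ hy'.le hy'1)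
  have hcard : (Fintype.card ι : ℝ) ≤ 1 := by
    rw [← hsum', ← nsmul_one, Fintype.card, ← Finset.sum_const]
    exact Finset.sum_le_sum fun j _ => hone j
  exact absurd Fintype.one_lt_card (not_lt.2 (Nat.cast_le_one.1 hcard))

end Conjugates

theorem reducible_of_lipEquiv_dustLike_general {Y ι : Type*} [MetricSpace Y] [Finite ι]
    [Nontrivial ι] {lam : ℝ} {n m : ℕ} {E : Set ℝ} (hE : IsInClassA lam n m E) {g : ι → Y → Y}
    {r : ι → ℝ} {F : Set Y} (hF : IsDustSystem g r F) (hEF : LipEquiv E F) :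
    ∃ k : ℕ, 2 ≤ k ∧
      ¬ Irreducible (X ^ (2 * k) - C (n : ℤ) * X ^ k + C (m : ℤ)) := by
  have := Fintype.ofFinite ι
  obtain ⟨B, hB, hBE, rfl, rfl⟩ := hE.exists_isOverlapDigitSet
  obtain ⟨-, hm, hmn, -⟩ := hE
  obtain ⟨α, β, hadd, hmul, hβ, hα⟩ := exists_add_eq_mul_eq_of_add_one_lt
    (s := B.card) (p := (overlapStarts lam lam B).card) (mod_cast hm) (mod_cast hmn)
  have hcard := hB.tendsto_card_endpoints_div_pow hadd hmul hβ.1.le (hβ.2.trans hα)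
  obtain ⟨κ, hF'⟩ := hF.exists_isDustTree
  obtain ⟨κ', D, A, hA⟩ := hF'.exists_of_lipEquiv hEF
  obtain ⟨x, hx, hsum, hrat⟩ := hA.exists_weights hBE hB hα
    (div_pos (one_pos.trans hα) (sub_pos.2 (hβ.2.trans hα))) hcard
  obtain ⟨k, hk, hirr⟩ := exists_not_irreducible_expand
    (monic_X_sq_sub_add (B.card : ℤ) (overlapStarts lam lam B).card) (one_pos.trans hα) hβ
    (aeval_X_sq_sub_add_eq_zero (by simpa using hadd) (by simpa using hmul))
    (aeval_X_sq_sub_add_eq_zero (β := α) (by simpa [add_comm] using hadd)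
      (by simpa [mul_comm] using hmul))
    (fun j => (hx j).le) hsum hrat
  exact ⟨k, hk, by simpa [pow_mul, mul_comm 2 k] using hirr⟩

/-- If `E ∈ 𝒜(λ, n, m)` is Lipschitz equivalent to some dust-like
self-similar set, then there is an integer `k ≥ 2` such that
`x^(2k) - n x^k + m` is reducible in `ℤ[x]`. -/
theorem reducible_of_lipEquiv_dustLike
    (lam : ℝ) (n m : ℕ) (E : Set ℝ) (hE : IsInClassA lam n m E)
    (hF : ∃ (d : ℕ) (F : Set (EuclideanSpace ℝ (Fin d))), IsDustLike F ∧ LipEquiv E F) :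
    ∃ k : ℕ, 2 ≤ k ∧
      ¬ Irreducible (X ^ (2 * k) - C (n : ℤ) * X ^ k + C (m : ℤ)) := by
  obtain ⟨d, F, ⟨hne, hcomp, t, ht, g, r, hr, hdist, hunion, hdisj⟩, hEF⟩ := hF
  have := Fin.nontrivial_iff_two_le.2 ht
  exact reducible_of_lipEquiv_dustLike_general hE ⟨hne, hcomp, hr, hdist, hunion, hdisj⟩ hEF
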